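/- arXiv:1307.2767 — 12 statements merged into one kernel-verified Lean document; each statement's English description precedes it below -/
import Mathlib

section
/- For all positive integers k, m, n, the (k+m-1)-th power of the n-th Fibonacci number divides G(k,n,m); that is, F_n^{k+m-1} ∣ G(k,n,m). -/
/-- `G n m k` is the sequence from the paper: `G(1,n,m) = F_n^m`,
`G(k+1,n,m) = F_{n·G(k,n,m)}`. The value at `k = 0` is junk. -/
def G (n m : ℕ) : ℕ → ℕ
  | 0 => 1
  | 1 => Nat.fib n ^ m
  | (k+2) => Nat.fib (n * G n m (k+1))

lemma fib_mul_expand (M r : ℕ) : ∃ x y : ℤ,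
    (Nat.fib ((M+1) * (r+1)) : ℤ) = Nat.fib (M+1) *
      ((r+1) * (Nat.fib (M+2) : ℤ)^r + Nat.fib (M+1) * x) ∧
    (Nat.fib ((M+1) * (r+1) + 1) : ℤ) = (Nat.fib (M+2) : ℤ)^(r+1) + Nat.fib (M+1) * y := by
  induction r with
  | zero => exact ⟨0, 0, by simp, by simp⟩
  | succ r ih =>
    obtain ⟨x, y, h1, h2⟩ := ih
    have e1 : (Nat.fib ((M+1) * (r+1+1)) : ℤ) =
        Nat.fib ((M+1)*(r+1)) * Nat.fib M + Nat.fib ((M+1)*(r+1)+1) * Nat.fib (M+1) := by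
      have := Nat.fib_add ((M+1)*(r+1)) M
      rw [show (M+1) * (r+1+1) = (M+1)*(r+1) + M + 1 by ring]
      exact_mod_cast this
    have e2 : (Nat.fib ((M+1) * (r+1+1) + 1) : ℤ) =
        Nat.fib ((M+1)*(r+1)) * Nat.fib (M+1) + Nat.fib ((M+1)*(r+1)+1) * Nat.fib (M+2) := by
      have := Nat.fib_add ((M+1)*(r+1)) (M+1)
      rw [show (M+1) * (r+1+1) + 1 = (M+1)*(r+1) + (M + 1) + 1 by ring]
      exact_mod_cast this
    have e3 : (Nat.fib M : ℤ) = Nat.fib (M+2) - Nat.fib (M+1) := by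
      rw [Nat.fib_add_two]; push_cast; ring
    refine ⟨Nat.fib (M+2) * x - (r+1) * (Nat.fib (M+2) : ℤ)^r - Nat.fib (M+1) * x + y,
      Nat.fib ((M+1)*(r+1)) + y * Nat.fib (M+2), ?_, ?_⟩
    · rw [e1, e3, h1, h2]; push_cast; ring
    · rw [e2, h2]; ring

lemma fib_mul_dvd (N r d : ℕ) (hN : 1 ≤ N) (hr : 1 ≤ r) (hd : r ∣ Nat.fib N)
    (h : d ∣ Nat.fib N) : d * r ∣ Nat.fib (N * r) := by
  obtain ⟨M, rfl⟩ := Nat.exists_eq_add_of_le' hN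
  obtain ⟨s, rfl⟩ := Nat.exists_eq_add_of_le' hr
  obtain ⟨x, y, h1, -⟩ := fib_mul_expand M s
  rw [← Int.natCast_dvd_natCast, h1, Nat.cast_mul]
  apply mul_dvd_mul (Int.natCast_dvd_natCast.2 h)
  apply dvd_add
  · push_cast; exact dvd_mul_right _ _
  · exact (Int.natCast_dvd_natCast.2 hd).mul_right _

lemma fib_pow_dvd (n j : ℕ) (hn : 1 ≤ n) :
    Nat.fib n ^ (j+1) ∣ Nat.fib (n * Nat.fib n ^ j) := by
  have hp : 0 < Nat.fib n := Nat.fib_pos.2 hn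
  induction j with
  | zero => simp
  | succ j ih =>
    rw [pow_succ, pow_succ _ j, ← mul_assoc]
    exact fib_mul_dvd _ _ _ (Nat.mul_pos hn (pow_pos hp j)) hp
      (Nat.fib_dvd _ _ (dvd_mul_right _ _)) ih

theorem stmt_0 (k m n : ℕ) (hk : 1 ≤ k) (hm : 1 ≤ m) (hn : 1 ≤ n) :
    Nat.fib n ^ (k + m - 1) ∣ G n m k := by
  obtain ⟨k, rfl⟩ := Nat.exists_eq_add_of_le' hk
  rw [show k + 1 + m - 1 = k + m by omega]
  clear hk
  induction k with
  | zero => simp [G]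
  | succ k ih =>
    rw [show k + 1 + m = k + m + 1 by ring]
    exact (fib_pow_dvd n (k+m) hn).trans (Nat.fib_dvd _ _ (mul_dvd_mul_left n ih))
end

section
/- Let k ≥ 2, n ≥ 3, and m ≥ 1 be integers with k even and n not divisible by 3. Then G(k,n,m)/F_n^{k+m-1} ≡ 1 (mod F_n). -/
/-- the predecessor Fibonacci number as an integer -/
def pfib (M : ℕ) : ℤ := (Nat.fib (M + 1) : ℤ) - Nat.fib M

theorem fib_step (M K : ℕ) :
    ((Nat.fib (K + M) : ℕ) : ℤ) = Nat.fib K * (pfib M + Nat.fib M) + pfib K * Nat.fib M ∧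
    pfib (K + M) = Nat.fib K * Nat.fib M + pfib K * pfib M := by
  have h1 : ((Nat.fib (K + M + 1) : ℕ) : ℤ) =
      Nat.fib K * Nat.fib M + Nat.fib (K + 1) * Nat.fib (M + 1) := by
    rw [Nat.fib_add]; push_cast; ring
  have h2 : ((Nat.fib (K + M) : ℕ) : ℤ) =
      Nat.fib K * (pfib M + Nat.fib M) + pfib K * Nat.fib M := by
    have h3 := Nat.fib_add (K + 1) M
    have h4 : Nat.fib (K + 1 + M + 1) = Nat.fib (K + M) + Nat.fib (K + M + 1) := by
      rw [show K + 1 + M + 1 = K + M + 2 by ring, Nat.fib_add_two]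
    have h5 : Nat.fib (K + 1 + 1) = Nat.fib K + Nat.fib (K + 1) := Nat.fib_add_two
    rw [h4, h5] at h3
    have h6 : ((Nat.fib (K + M) : ℕ) : ℤ) + (Nat.fib (K + M + 1) : ℕ) =
      Nat.fib (K + 1) * Nat.fib M + (Nat.fib K + Nat.fib (K + 1)) * Nat.fib (M + 1) := by
      exact_mod_cast h3
    unfold pfib
    linear_combination h6 - h1
  refine ⟨h2, ?_⟩
  have : pfib (K + M) = (Nat.fib (K + M + 1) : ℕ) - (Nat.fib (K + M) : ℕ) := rfl
  rw [this, h1, h2]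
  unfold pfib
  ring

theorem expand3 (M t : ℕ) : ∃ y z : ℤ,
    ((Nat.fib (M * (t + 2)) : ℕ) : ℤ) = (t + 2) * pfib M ^ (t + 1) * Nat.fib M
      + ((t + 2).choose 2 : ℕ) * pfib M ^ t * Nat.fib M ^ 2 + Nat.fib M ^ 3 * y ∧
    pfib (M * (t + 2)) = pfib M ^ (t + 2)
      + ((t + 2).choose 2 : ℕ) * pfib M ^ t * Nat.fib M ^ 2 + Nat.fib M ^ 3 * z := by
  induction t with
  | zero =>
    refine ⟨0, 0, ?_, ?_⟩
    · rw [show M * (0 + 2) = M + M by ring, (fib_step M M).1]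
      norm_num
      ring
    · rw [show M * (0 + 2) = M + M by ring, (fib_step M M).2]
      norm_num
      ring
  | succ t ih =>
    obtain ⟨y, z, h1, h2⟩ := ih
    have hs := fib_step M (M * (t + 2))
    have hc : ((t + 1 + 2).choose 2 : ℕ) = (t + 2) + (t + 2).choose 2 := by
      rw [show t + 1 + 2 = (t + 2) + 1 by ring, Nat.choose_succ_succ' (t + 2) 1]
      simp
    rw [show M * (t + 1 + 2) = M * (t + 2) + M by ring, hs.1, hs.2, h1, h2, hc]
    generalize (t + 2).choose 2 = c
    refine ⟨y * (pfib M + Nat.fib M) + c * pfib M ^ t + c * pfib M ^ t + z * Nat.fib M,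
      c * pfib M ^ t + y * Nat.fib M + z * pfib M, ?_, ?_⟩
    · push_cast; ring
    · push_cast; ring

theorem expand2 (M t : ℕ) : ∃ y z : ℤ,
    ((Nat.fib (M * (t + 1)) : ℕ) : ℤ) = (t + 1) * pfib M ^ t * Nat.fib M
      + Nat.fib M ^ 2 * y ∧
    pfib (M * (t + 1)) = pfib M ^ (t + 1) + Nat.fib M * z := by
  cases t with
  | zero => exact ⟨0, 0, by simp, by simp⟩
  | succ t =>
    obtain ⟨y, z, h1, h2⟩ := expand3 M t
    refine ⟨((t + 2).choose 2 : ℕ) * pfib M ^ t + Nat.fib M * y,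
      ((t + 2).choose 2 : ℕ) * pfib M ^ t * Nat.fib M + Nat.fib M ^ 2 * z, ?_, ?_⟩
    · rw [h1]; push_cast; ring
    · rw [h2]; ring

/-- powers of `u` -/
theorem key_pow (n u : ℕ) (hu : Nat.fib n = u) (hodd : u % 2 = 1) (h3 : 3 ≤ u) (r : ℕ) :
    ∃ g : ℤ, ((Nat.fib (n * u ^ r) : ℕ) : ℤ) = u ^ (r + 1) * g ∧
      g ≡ pfib n ^ (u ^ r - 1) [ZMOD u] ∧ pfib (n * u ^ r) ≡ pfib n ^ (u ^ r) [ZMOD u] := by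
  induction r with
  | zero => exact ⟨1, by simp [hu], by simp, by simp⟩
  | succ r ih =>
    obtain ⟨g, h1, h2, h4⟩ := ih
    obtain ⟨t, ht⟩ : ∃ t, u = t + 2 := ⟨u - 2, by omega⟩
    obtain ⟨y, z, e1, e2⟩ := expand3 (n * u ^ r) t
    rw [← ht, show n * u ^ r * u = n * u ^ (r + 1) by ring] at e1 e2
    obtain ⟨c, hc⟩ : ∃ c, u.choose 2 = u * c := by
      obtain ⟨s, hs⟩ : ∃ s, u = 2 * s + 1 := ⟨u / 2, by omega⟩
      refine ⟨s, ?_⟩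
      rw [Nat.choose_two_right, hs, show 2 * s + 1 - 1 = 2 * s by omega,
        show (2 * s + 1) * (2 * s) = ((2 * s + 1) * s) * 2 by ring]
      simp
    have htz : (t : ℤ) + 2 = u := by rw [ht]; push_cast; ring
    set w := pfib (n * u ^ r) with hw
    rw [hc, h1] at e1 e2
    rw [htz] at e1
    have hpos : 1 ≤ u ^ r := Nat.one_le_pow _ _ (by omega)
    refine ⟨w ^ (t + 1) * g + u * (c * w ^ t * g ^ 2 * (u : ℤ) ^ r
      + u ^ (2 * r) * g ^ 3 * y), ?_, ?_, ?_⟩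
    · rw [e1]; push_cast; ring
    · have : u ^ (r + 1) - 1 = u ^ r * (t + 1) + (u ^ r - 1) := by
        have : u ^ (r + 1) = u ^ r * (t + 1) + u ^ r := by rw [pow_succ]; nth_rw 2 [ht]; ring
        omega
      rw [this, pow_add (pfib n), pow_mul (pfib n)]
      refine Int.ModEq.trans (b := w ^ (t + 1) * g) ?_ ((h4.pow _).mul h2)
      exact (Int.modEq_iff_dvd.2 ⟨-(c * w ^ t * g ^ 2 * (u : ℤ) ^ r
        + u ^ (2 * r) * g ^ 3 * y), by ring⟩)
    · rw [e2, pow_succ u r, pow_mul]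
      refine Int.ModEq.trans (b := w ^ u) ?_ (h4.pow _)
      refine (Int.modEq_iff_dvd.2 ⟨-(c * w ^ t * (u ^ (r + 1) * g) ^ 2
        + u ^ (3 * r + 2) * g ^ 3 * z), ?_⟩)
      push_cast; ring

theorem key (n u : ℕ) (hu : Nat.fib n = u) (hodd : u % 2 = 1) (h3 : 3 ≤ u) (r q : ℕ)
    (hq : 1 ≤ q) :
    ∃ g : ℕ, Nat.fib (n * (u ^ r * q)) = u ^ (r + 1) * g ∧ 1 ≤ g ∧
      (g : ℤ) ≡ q * pfib n ^ (u ^ r * q - 1) [ZMOD u] := by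
  obtain ⟨a, h1, h2, h4⟩ := key_pow n u hu hodd h3 r
  obtain ⟨t, rfl⟩ : ∃ t, q = t + 1 := ⟨q - 1, by omega⟩
  obtain ⟨y, z, e1, -⟩ := expand2 (n * u ^ r) t
  rw [h1, mul_assoc] at e1
  have hup : 0 < u ^ (r + 1) := by positivity
  have hpos : 1 ≤ u ^ r := Nat.one_le_pow _ _ (by omega)
  set w := pfib (n * u ^ r)
  have e3 : ((Nat.fib (n * (u ^ r * (t + 1))) : ℕ) : ℤ) =
      u ^ (r + 1) * ((t + 1) * w ^ t * a + u * (u ^ r * a ^ 2 * y)) := by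
    rw [e1]; ring
  have hd : u ^ (r + 1) ∣ Nat.fib (n * (u ^ r * (t + 1))) := by
    have : ((u ^ (r + 1) : ℕ) : ℤ) ∣ (Nat.fib (n * (u ^ r * (t + 1))) : ℕ) :=
      ⟨_, by rw [e3]; push_cast; rfl⟩
    exact_mod_cast this
  obtain ⟨g, hg⟩ := hd
  have hn : 0 < n := by
    rcases Nat.eq_zero_or_pos n with h | h
    · subst h; simp at hu; omega
    · exact h
  refine ⟨g, hg, ?_, ?_⟩
  · have : 0 < Nat.fib (n * (u ^ r * (t + 1))) := Nat.fib_pos.2 (by positivity)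
    rw [hg] at this
    exact Nat.pos_of_mul_pos_left this
  · have hgz : (g : ℤ) = (t + 1) * w ^ t * a + u * (u ^ r * a ^ 2 * y) := by
      rw [hg] at e3
      push_cast at e3
      have : ((u : ℤ) ^ (r + 1)) ≠ 0 := by positivity
      exact mul_left_cancel₀ this e3
    have : u ^ r * (t + 1) - 1 = u ^ r * t + (u ^ r - 1) := by
      rw [mul_add, mul_one]; omega
    rw [hgz, this, pow_add, pow_mul, ← mul_assoc (((t + 1 : ℕ) : ℤ))]
    refine Int.ModEq.trans (b := (t + 1) * w ^ t * a) ?_ ?_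
    · exact Int.modEq_iff_dvd.2 ⟨-(u ^ r * a ^ 2 * y), by ring⟩
    · push_cast
      exact (((h4.pow t).mul_left _).mul h2)

theorem cassini (n : ℕ) : (Nat.fib (n + 1) : ℤ) ^ 2 - Nat.fib n * Nat.fib (n + 1)
    - (Nat.fib n : ℤ) ^ 2 = (-1) ^ n := by
  induction n with
  | zero => simp
  | succ n ih =>
    rw [Nat.fib_add_two (n := n), pow_succ (-1 : ℤ) n, ← ih]; push_cast; ring

theorem pfib_sq (n : ℕ) : pfib n ^ 2 ≡ (-1) ^ n [ZMOD Nat.fib n] := by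
  rw [← cassini]
  unfold pfib
  exact Int.modEq_iff_dvd.2 ⟨Nat.fib (n + 1) - 2 * Nat.fib n, by ring⟩

theorem fib_even_iff (n : ℕ) : 2 ∣ Nat.fib n ↔ 3 ∣ n := by
  constructor
  · intro h
    have h1 := Nat.fib_gcd 3 n
    rw [show Nat.fib 3 = 2 from rfl, Nat.gcd_eq_left h] at h1
    rcases (Nat.dvd_prime Nat.prime_three).1 (Nat.gcd_dvd_left 3 n) with h2 | h2
    · rw [h2] at h1; simp at h1
    · exact h2 ▸ Nat.gcd_dvd_right 3 n
  · intro h; exact Nat.fib_dvd 3 n h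

theorem fib_three_iff (n : ℕ) : 3 ∣ Nat.fib n ↔ 4 ∣ n := by
  constructor
  · intro h
    have h1 := Nat.fib_gcd 4 n
    rw [show Nat.fib 4 = 3 from rfl, Nat.gcd_eq_left h] at h1
    have h3 : Nat.gcd 4 n ≤ 4 := Nat.gcd_le_left _ (by norm_num)
    have h2 : Nat.gcd 4 n = 4 := by
      generalize Nat.gcd 4 n = d at *
      interval_cases d <;> simp_all [Nat.fib]
    exact h2 ▸ Nat.gcd_dvd_right 4 n
  · intro h; exact Nat.fib_dvd 4 n h

theorem fib_mod4 (n : ℕ) (h2 : n % 2 = 1) (h3 : ¬ 3 ∣ n) : Nat.fib n % 4 = 1 := by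
  have hp : ∀ j, Nat.fib (6 * j) % 4 = 0 ∧ Nat.fib (6 * j + 1) % 4 = 1 := by
    intro j
    induction j with
    | zero => simp
    | succ j ih =>
      have a (i : ℕ) : Nat.fib (i + 2) = Nat.fib i + Nat.fib (i + 1) := Nat.fib_add_two
      have a0 := a (6 * j)
      have a1 := a (6 * j + 1)
      have a2 := a (6 * j + 2)
      have a3 := a (6 * j + 3)
      have a4 := a (6 * j + 4)
      have a5 := a (6 * j + 5)
      simp only [Nat.add_assoc, Nat.reduceAdd, Nat.mul_add, Nat.reduceMul] at *
      omega
  obtain ⟨j, h | h⟩ : ∃ j, n = 6 * j + 1 ∨ n = 6 * j + 5 := ⟨n / 6, by omega⟩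
  · rw [h]; exact (hp j).2
  · have a (i : ℕ) : Nat.fib (i + 2) = Nat.fib i + Nat.fib (i + 1) := Nat.fib_add_two
    have a0 := a (6 * j)
    have a1 := a (6 * j + 1)
    have a2 := a (6 * j + 2)
    have a3 := a (6 * j + 3)
    have := hp j
    rw [h]
    simp only [Nat.add_assoc, Nat.reduceAdd] at *
    omega

/-- the quotients -/
theorem quot_step (n m u : ℕ) (hu : Nat.fib n = u) (hodd : u % 2 = 1) (h3 : 3 ≤ u) (j q : ℕ)
    (hq : 1 ≤ q) (hG : G n m (j + 1) = u ^ (j + m) * q) :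
    ∃ g : ℕ, G n m (j + 2) = u ^ (j + 1 + m) * g ∧ 1 ≤ g ∧
      (g : ℤ) ≡ q * pfib n ^ (G n m (j + 1) - 1) [ZMOD u] := by
  obtain ⟨g, h1, h2, h4⟩ := key n u hu hodd h3 (j + m) q hq
  refine ⟨g, ?_, h2, ?_⟩
  · rw [G, hG, h1]; congr 2; ring
  · rw [hG]; exact h4

theorem case_good (n m : ℕ) (h3 : ¬ 3 ∣ n) (h4 : ¬ 4 ∣ n) (j : ℕ) :
    G n m (j + 1) % 2 = 1 ∧ ¬ 3 ∣ G n m (j + 1) ∧ (n % 2 = 1 → G n m (j + 1) % 4 = 1) := by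
  induction j with
  | zero =>
    simp only [zero_add, G]
    refine ⟨?_, ?_, ?_⟩
    · have : Nat.fib n % 2 = 1 := by have := fib_even_iff n; omega
      simp [Nat.pow_mod, this]
    · intro h
      exact h4 ((fib_three_iff n).1 (Nat.prime_three.dvd_of_dvd_pow h))
    · intro h
      simp [Nat.pow_mod, fib_mod4 n h h3]
  | succ j ih =>
    obtain ⟨a, b, -⟩ := ih
    simp only [G]
    generalize G n m (j + 1) = N at *
    have i3 : ¬ 3 ∣ n * N := fun h => (Nat.prime_three.dvd_mul.1 h).elim h3 b
    have i4 : ¬ 4 ∣ n * N := fun h => h4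
      (Nat.Coprime.dvd_of_dvd_mul_right
        (show Nat.Coprime (2 ^ 2) N from
          Nat.Coprime.pow_left 2 (Nat.coprime_two_left.2 (Nat.odd_iff.2 a))) h)
    refine ⟨?_, fun h => i4 ((fib_three_iff _).1 h), fun h => fib_mod4 _ ?_ i3⟩
    · have := fib_even_iff (n * N); omega
    · simp [Nat.mul_mod, a, h]

theorem case_bad (n m : ℕ) (hm : 1 ≤ m) (h4 : 4 ∣ n) (j : ℕ) :
    3 ∣ G n m (j + 1) ∧ G n m (j + 2) % 2 = 0 := by
  have h : 3 ∣ G n m (j + 1) := by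
    cases j with
    | zero =>
      simp only [zero_add, G]
      exact dvd_pow ((fib_three_iff n).2 h4) (by omega)
    | succ j =>
      simp only [G]
      exact (fib_three_iff _).2 (h4.mul_right _)
  refine ⟨h, ?_⟩
  simp only [G]
  exact Nat.mod_eq_zero_of_dvd ((fib_even_iff _).2 (h.mul_left _))

theorem main_quot (n m : ℕ) (hn : 3 ≤ n) (hm : 1 ≤ m) (h3 : ¬ 3 ∣ n) (i : ℕ) :
    ∃ q : ℕ, G n m (2 * i + 2) = Nat.fib n ^ (2 * i + 1 + m) * q ∧ 1 ≤ q ∧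
      (q : ℤ) ≡ 1 [ZMOD Nat.fib n] := by
  obtain ⟨u, hu⟩ : ∃ u, Nat.fib n = u := ⟨_, rfl⟩
  have hodd : u % 2 = 1 := by have := fib_even_iff n; omega
  have hu3 : 3 ≤ u := by
    have : Nat.fib 4 ≤ Nat.fib n := Nat.fib_mono (by omega)
    rw [hu] at this; exact this
  have hsq := pfib_sq n
  rw [hu] at hsq ⊢
  have G1 : G n m (0 + 1) = u ^ (0 + m) * 1 := by simp [G, hu]
  have ev1 : Even n → ∀ e, e % 2 = 0 → pfib n ^ e ≡ 1 [ZMOD u] := by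
    intro he e h
    obtain ⟨s, rfl⟩ : ∃ s, e = 2 * s := ⟨e / 2, by omega⟩
    rw [he.neg_one_pow] at hsq
    rw [pow_mul]
    simpa using hsq.pow s
  by_cases h4 : 4 ∣ n
  · have he : Even n := Nat.even_iff.2 (by omega)
    have hb := case_bad n m hm h4
    induction i with
    | zero =>
      obtain ⟨g, a, b, c⟩ := quot_step n m u hu hodd hu3 0 1 le_rfl G1
      refine ⟨g, a, b, c.trans ?_⟩
      have : G n m (0 + 1) % 2 = 1 := by rw [G1]; simp [Nat.pow_mod, hodd]
      simpa using ev1 he (G n m (0 + 1) - 1) (by omega)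
    | succ i ih =>
      obtain ⟨q, a, b, c⟩ := ih
      obtain ⟨g, a1, b1, c1⟩ := quot_step n m u hu hodd hu3 (2 * i + 1) q b a
      obtain ⟨g', a2, b2, c2⟩ := quot_step n m u hu hodd hu3 (2 * i + 2) g b1 a1
      refine ⟨g', a2, b2, c2.trans ?_⟩
      have p1 : G n m (2 * i + 1 + 1) % 2 = 0 := (hb (2 * i)).2
      have p2 : G n m (2 * i + 2 + 1) % 2 = 0 := (hb (2 * i + 1)).2
      have q1 : 0 < G n m (2 * i + 1 + 1) := by rw [a]; positivity
      have q2 : 0 < G n m (2 * i + 2 + 1) := by rw [a1]; positivity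
      refine ((c1.trans (c.mul_right _)).mul_right _).trans ?_
      rw [one_mul, ← pow_add]
      exact ev1 he _ (by omega)
  · have hg := case_good n m h3 h4
    have hv : ∀ j, pfib n ^ (G n m (j + 1) - 1) ≡ 1 [ZMOD u] := by
      intro j
      obtain ⟨x, -, z⟩ := hg j
      rcases Nat.even_or_odd n with he | ho
      · exact ev1 he _ (by omega)
      · have z := z (Nat.odd_iff.1 ho)
        obtain ⟨s, hs⟩ : ∃ s, G n m (j + 1) - 1 = 2 * (2 * s) :=
          ⟨(G n m (j + 1) - 1) / 4, by omega⟩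
        rw [ho.neg_one_pow] at hsq
        rw [hs, pow_mul]
        simpa [pow_mul] using hsq.pow (2 * s)
    have all : ∀ j, ∃ q : ℕ, G n m (j + 1) = u ^ (j + m) * q ∧ 1 ≤ q ∧
        (q : ℤ) ≡ 1 [ZMOD u] := by
      intro j
      induction j with
      | zero => exact ⟨1, G1, le_rfl, by simp⟩
      | succ j ih =>
        obtain ⟨q, a, b, c⟩ := ih
        obtain ⟨g, a1, b1, c1⟩ := quot_step n m u hu hodd hu3 j q b a
        exact ⟨g, a1, b1, c1.trans (by simpa using c.mul (hv j))⟩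
    exact all (2 * i + 1)

theorem stmt_1 (k n m : ℕ) (hk : 2 ≤ k) (hn : 3 ≤ n) (hm : 1 ≤ m)
    (hke : Even k) (h3 : ¬ (3 ∣ n)) :
    G n m k / Nat.fib n ^ (k + m - 1) ≡ 1 [MOD Nat.fib n] := by
  obtain ⟨i, rfl⟩ : ∃ i, k = 2 * i + 2 := by
    obtain ⟨s, hs⟩ := hke
    exact ⟨s - 1, by omega⟩
  obtain ⟨q, a, -, c⟩ := main_quot n m hn hm h3 i
  have hp : 0 < Nat.fib n := Nat.fib_pos.2 (by omega)
  rw [a, show 2 * i + 2 + m - 1 = 2 * i + 1 + m by omega,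
    Nat.mul_div_cancel_left _ (by positivity)]
  exact Int.natCast_modEq_iff.1 (by exact_mod_cast c)
end

section
/- Let k ≥ 2, n ≥ 3, and m ≥ 1 be integers with k odd, 3 ∤ n, and 4 ∣ n. Then G(k,n,m)/F_n^{k+m-1} ≡ F_{n-1} (mod F_n). -/
/-- Cassini-type identity. -/
theorem cassini_aux (n : ℕ) :
    ((Nat.fib (n+1) : ℤ))^2 - Nat.fib (n+1) * Nat.fib n - (Nat.fib n : ℤ)^2 = (-1)^n := by
  induction n with
  | zero => simp
  | succ n ih =>
    rw [Nat.fib_add_two, pow_succ (-1 : ℤ), ← ih]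
    push_cast
    ring

theorem fib_rec_u (N t : ℕ) : (Nat.fib (N * (t+1)) : ℤ)
    = Nat.fib (N*t) * (Nat.fib (N+1) - Nat.fib N) + Nat.fib (N*t+1) * Nat.fib N := by
  rcases N with _ | M
  · simp
  · have h := Nat.fib_add ((M+1)*t) M
    have e : (M+1) * (t+1) = (M+1)*t + M + 1 := by ring
    rw [e, h, Nat.fib_add_two (n := M)]
    push_cast
    ring

theorem fib_rec_w (N t : ℕ) : (Nat.fib (N * (t+1) + 1) : ℤ)
    = Nat.fib (N*t) * Nat.fib N + Nat.fib (N*t+1) * Nat.fib (N+1) := by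
  have h := Nat.fib_add (N*t) N
  have e : N * (t+1) + 1 = N*t + N + 1 := by ring
  rw [e, h]
  push_cast
  ring

/-- Expansion of `F_{Nt}` to second order in `F_N`. -/
theorem fib_expand (N t : ℕ) :
    (∃ p : ℤ, (Nat.fib (N*t+1) : ℤ) * Nat.fib (N+1)
        = (Nat.fib (N+1) : ℤ)^(t+1) + (Nat.fib N : ℤ)^2 * p) ∧
    (∃ q : ℤ, (Nat.fib (N+1) : ℤ)^2 * Nat.fib (N*t)
        = t * Nat.fib N * (Nat.fib (N+1) : ℤ)^(t+1)
          - (t.choose 2 : ℕ) * (Nat.fib N : ℤ)^2 * (Nat.fib (N+1) : ℤ)^t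
          + (Nat.fib N : ℤ)^3 * q) ∧ (∃ s : ℤ, (Nat.fib (N*t) : ℤ) = Nat.fib N * s) := by
  induction t with
  | zero => exact ⟨⟨0, by simp⟩, ⟨0, by simp⟩, ⟨0, by simp⟩⟩
  | succ t ih =>
    obtain ⟨⟨p, hp⟩, ⟨q, hq⟩, ⟨s, hs⟩⟩ := ih
    have hc : (((t+1).choose 2 : ℕ) : ℤ) = t + (t.choose 2 : ℕ) := by
      rw [Nat.choose_succ_succ' t 1]; simp
    rw [fib_rec_u, fib_rec_w, hc]
    generalize (Nat.fib (N+1) : ℤ) = d at *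
    generalize (Nat.fib N : ℤ) = x at *
    generalize (Nat.fib (N*t) : ℤ) = u at *
    generalize (Nat.fib (N*t+1) : ℤ) = w at *
    generalize ((t.choose 2 : ℕ) : ℤ) = b at *
    push_cast
    refine ⟨⟨s*d + p*d, ?_⟩, ⟨q*(d-x) + b*d^t + p*d, ?_⟩, ⟨s*(d-x)+w, ?_⟩⟩
    · linear_combination d*hp + x*d*hs
    · linear_combination (d-x)*hq + x*d*hp
    · linear_combination (d-x)*hs

theorem coprime_aux (n r : ℕ) :
    IsCoprime (Nat.fib n : ℤ) (Nat.fib (n*r+1) : ℤ) := by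
  have h := Nat.fib_coprime_fib_succ (n*r)
  have h2 : Nat.Coprime (Nat.fib n) (Nat.fib (n*r+1)) :=
    Nat.Coprime.coprime_dvd_left (Nat.fib_dvd _ _ (dvd_mul_right n r)) h
  exact Nat.isCoprime_iff_coprime.mpr h2

theorem coprime_aux1 (n : ℕ) :
    IsCoprime (Nat.fib n : ℤ) (Nat.fib (n+1) : ℤ) := by
  simpa using coprime_aux n 1

/-- `F_{nr+1} ≡ F_{n+1}^r (mod F_n)`. -/
theorem w_mod (n r : ℕ) :
    (Nat.fib n : ℤ) ∣ (Nat.fib (n*r+1) : ℤ) - (Nat.fib (n+1) : ℤ)^r := by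
  obtain ⟨⟨p, hp⟩, -⟩ := fib_expand n r
  refine (coprime_aux1 n).dvd_of_dvd_mul_right ⟨Nat.fib n * p, ?_⟩
  linear_combination hp

theorem main_congr (n : ℕ) (hodd : Odd (Nat.fib n)) (c j : ℕ) :
    (Nat.fib n : ℤ)^(j+2) ∣ (Nat.fib (n+1) : ℤ) * Nat.fib (n * (Nat.fib n ^ j * c))
      - (Nat.fib n : ℤ)^(j+1) * c * (Nat.fib (n+1) : ℤ)^(Nat.fib n ^ j * c) := by
  induction j with
  | zero =>
    obtain ⟨-, ⟨q, hq⟩, -⟩ := fib_expand n c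
    simp only [pow_zero, one_mul, zero_add, pow_one]
    refine (coprime_aux1 n).pow_left.dvd_of_dvd_mul_left (x := (Nat.fib n : ℤ)^2)
      (y := (Nat.fib (n+1) : ℤ))
      ⟨-((c.choose 2 : ℕ) : ℤ) * (Nat.fib (n+1) : ℤ)^c + Nat.fib n * q, ?_⟩
    linear_combination hq
  | succ j ih =>
    set r := Nat.fib n ^ j * c with hr
    have e1 : Nat.fib n ^ (j+1) * c = r * Nat.fib n := by rw [hr]; ring
    rw [e1, ← mul_assoc]
    obtain ⟨-, ⟨q, hq⟩, -⟩ := fib_expand (n*r) (Nat.fib n)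
    have hw := w_mod n r
    have hcop := coprime_aux n r
    have hcop1 := coprime_aux1 n
    obtain ⟨f, hf⟩ := hodd
    have hch : (((Nat.fib n).choose 2 : ℕ) : ℤ) = Nat.fib n * f := by
      have : (Nat.fib n).choose 2 = Nat.fib n * f := by
        rw [Nat.choose_two_right, hf, Nat.add_sub_cancel]
        rw [show (2*f+1)*(2*f) = ((2*f+1)*f)*2 by ring, Nat.mul_div_cancel _ (by norm_num)]
      exact_mod_cast this
    rw [hch] at hq
    have hpw : (Nat.fib n : ℤ) ∣ (Nat.fib (n*r+1) : ℤ)^(2*f) - (Nat.fib (n+1) : ℤ)^(r*(2*f)) := by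
      rw [pow_mul (Nat.fib (n+1) : ℤ) r]
      exact hw.trans (sub_dvd_pow_sub_pow _ _ _)
    rw [show (Nat.fib (n+1) : ℤ)^(r * Nat.fib n)
        = (Nat.fib (n+1) : ℤ)^r * (Nat.fib (n+1) : ℤ)^(r*(2*f)) by
        rw [← pow_add]; congr 1; rw [hf]; ring]
    rw [show (Nat.fib (n*r+1) : ℤ)^(Nat.fib n + 1)
        = (Nat.fib (n*r+1) : ℤ)^2 * (Nat.fib (n*r+1) : ℤ)^(2*f) by
        rw [← pow_add]; congr 1; rw [hf]; ring] at hq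
    generalize (Nat.fib (n*r+1) : ℤ)^(Nat.fib n) = Z at *
    generalize hY : (Nat.fib (n*r+1) : ℤ)^(2*f) = Y at *
    generalize hX : (Nat.fib (n+1) : ℤ)^(r*(2*f)) = X at *
    generalize (Nat.fib (n+1) : ℤ)^r = V at *
    clear hf hY hX hw hr hch e1
    generalize (Nat.fib (n*r*Nat.fib n) : ℤ) = T at *
    generalize (Nat.fib (n*r+1) : ℤ) = D at *
    generalize (Nat.fib (n*r) : ℤ) = x at *
    generalize (Nat.fib (n+1) : ℤ) = d at *
    generalize (Nat.fib n : ℤ) = F at *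
    have hx : F^(j+1) ∣ x := by
      refine hcop1.pow_left.dvd_of_dvd_mul_left (x := F^(j+1)) (y := d) ?_
      obtain ⟨a, ha⟩ := ih
      exact ⟨F*a + c*V, by linear_combination ha⟩
    obtain ⟨y, hy⟩ := hx
    obtain ⟨a, ha⟩ := ih
    obtain ⟨b, hb⟩ := hpw
    refine (hcop.pow (m := j+1+2) (n := 2)).dvd_of_dvd_mul_left ?_
    subst hy
    refine ⟨D^2*(Y*a + c*V*b) - d*f*F^j*y^2*Z + d*F^(2*j)*y^3*q, ?_⟩
    linear_combination d*hq + F*D^2*Y*ha + F^(j+2)*c*V*D^2*hb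

theorem step_aux (n : ℕ) (hodd : Odd (Nat.fib n)) (c j : ℕ) :
    ∃ c' : ℕ, Nat.fib (n * (Nat.fib n ^ j * c)) = Nat.fib n ^ (j+1) * c' ∧
      (Nat.fib n : ℤ) ∣ (Nat.fib (n+1) : ℤ) * c'
        - c * (Nat.fib (n+1) : ℤ)^(Nat.fib n ^ j * c) := by
  have h := main_congr n hodd c j
  have hcop1 := coprime_aux1 n
  have hF : (Nat.fib n : ℤ) ≠ 0 := by
    have := hodd.pos
    positivity
  have hd : (Nat.fib n : ℤ)^(j+1) ∣ (Nat.fib (n * (Nat.fib n ^ j * c)) : ℤ) := by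
    refine hcop1.pow_left.dvd_of_dvd_mul_left (x := (Nat.fib n : ℤ)^(j+1))
      (y := (Nat.fib (n+1) : ℤ)) ?_
    obtain ⟨a, ha⟩ := h
    exact ⟨Nat.fib n*a + c*(Nat.fib (n+1) : ℤ)^(Nat.fib n ^ j * c), by linear_combination ha⟩
  have hd' : Nat.fib n ^ (j+1) ∣ Nat.fib (n * (Nat.fib n ^ j * c)) := by exact_mod_cast hd
  obtain ⟨c', hc'⟩ := hd'
  refine ⟨c', hc', ?_⟩
  rw [hc'] at h
  obtain ⟨a, ha⟩ := h
  refine ⟨a, mul_left_cancel₀ (pow_ne_zero (j+1) hF) ?_⟩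
  push_cast at ha
  linear_combination ha

theorem stmt_3 (k n m : ℕ) (hk : 2 ≤ k) (hn : 3 ≤ n) (hm : 1 ≤ m)
    (hko : Odd k) (h3 : ¬ (3 ∣ n)) (h4 : 4 ∣ n) :
    G n m k / Nat.fib n ^ (k + m - 1) ≡ Nat.fib (n - 1) [MOD Nat.fib n] := by
  have hodd : Odd (Nat.fib n) := by
    have h := Nat.fib_gcd 3 n
    rw [(Nat.Prime.coprime_iff_not_dvd Nat.prime_three).mpr h3] at h
    have h' : Nat.Coprime 2 (Nat.fib n) := h.symm
    exact Nat.coprime_two_left.mp h'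
  have h3F : 3 ∣ Nat.fib n := Nat.fib_dvd 4 n h4
  have hneven : Even n := by
    obtain ⟨a, ha⟩ := h4
    exact ⟨2*a, by omega⟩
  have hdd : (Nat.fib n : ℤ) ∣ (Nat.fib (n+1) : ℤ)^2 - 1 := by
    have h := cassini_aux n
    rw [hneven.neg_one_pow] at h
    exact ⟨Nat.fib (n+1) + Nat.fib n, by linear_combination h⟩
  have hpow : ∀ e : ℕ, (Nat.fib n : ℤ) ∣ ((Nat.fib (n+1) : ℤ)^2)^e - 1 := fun e => by
    simpa using hdd.trans (sub_dvd_pow_sub_pow ((Nat.fib (n+1) : ℤ)^2) 1 e)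
  -- evenness
  have heven : ∀ j c : ℕ, Even (Nat.fib (n * (Nat.fib n ^ (j+1) * c))) := by
    intro j c
    have : 3 ∣ n * (Nat.fib n ^ (j+1) * c) :=
      Dvd.dvd.mul_left (Dvd.dvd.mul_right (dvd_pow h3F (by omega)) _) _
    exact even_iff_two_dvd.mpr (Nat.fib_dvd 3 _ this)
  have hstep : ∀ j c : ℕ, Even (Nat.fib n ^ j * c) →
      ∃ c' : ℕ, Nat.fib (n * (Nat.fib n ^ j * c)) = Nat.fib n ^ (j+1) * c' ∧
        (Nat.fib n : ℤ) ∣ c' - c * (Nat.fib (n+1) : ℤ) := by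
    intro j c he
    obtain ⟨c', h1, h2⟩ := step_aux n hodd c j
    refine ⟨c', h1, ?_⟩
    obtain ⟨e, hee⟩ := he
    rw [hee, ← two_mul, pow_mul] at h2
    obtain ⟨a, ha⟩ := h2
    obtain ⟨b, hb⟩ := hpow e
    obtain ⟨g, hg⟩ := hdd
    exact ⟨Nat.fib (n+1) * a + Nat.fib (n+1) * c * b - c' * g, by
      linear_combination (Nat.fib (n+1) : ℤ) * ha + (Nat.fib (n+1) : ℤ) * c * hb - c' * hg⟩
  have hind : ∀ i : ℕ, ∃ c : ℕ, G n m (i+2) = Nat.fib n ^ (i+1+m) * c ∧ Even (G n m (i+2)) ∧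
      (Nat.fib n : ℤ) ∣ c - (Nat.fib (n+1) : ℤ)^i := by
    intro i
    induction i with
    | zero =>
      obtain ⟨c', h1, h2⟩ := step_aux n hodd 1 m
      obtain ⟨m', rfl⟩ : ∃ m', m = m'+1 := ⟨m-1, by omega⟩
      have hG : G n (m'+1) (0+2) = Nat.fib (n * (Nat.fib n ^ (m'+1) * 1)) := by simp [G]
      refine ⟨c', ?_, ?_, ?_⟩
      · rw [hG, h1]; congr 2; ring
      · rw [hG]; exact heven _ _
      · obtain ⟨e, he⟩ : Odd (Nat.fib n ^ (m'+1) * 1) := by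
          rw [mul_one]; exact hodd.pow
        rw [he, pow_succ, pow_mul] at h2
        obtain ⟨b, hb⟩ := hpow e
        obtain ⟨a, ha⟩ := h2
        refine (coprime_aux1 n).dvd_of_dvd_mul_left ⟨a + Nat.fib (n+1) * b, ?_⟩
        push_cast at ha
        linear_combination ha + (Nat.fib (n+1) : ℤ) * hb
    | succ i ih =>
      obtain ⟨c, h1, h2, h3'⟩ := ih
      have hG : G n m (i+1+2) = Nat.fib (n * (Nat.fib n ^ (i+1+m) * c)) := by
        rw [← h1]; rfl
      obtain ⟨c', h5, h6⟩ := hstep (i+1+m) c (h1 ▸ h2)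
      refine ⟨c', ?_, ?_, ?_⟩
      · rw [hG, h5]; congr 2; ring
      · rw [hG, show i+1+m = (i+m)+1 by ring]; exact heven _ _
      · obtain ⟨a, ha⟩ := h6
        obtain ⟨b, hb⟩ := h3'
        exact ⟨a + b * Nat.fib (n+1), by linear_combination ha + (Nat.fib (n+1) : ℤ) * hb⟩
  obtain ⟨e, he⟩ := hko
  obtain ⟨e', rfl⟩ : ∃ e', e = e'+1 := ⟨e-1, by omega⟩
  obtain ⟨c, h1, -, h2⟩ := hind (2*e'+1)
  have hk' : k = 2*e'+1+2 := by omega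
  subst hk'
  rw [h1, show 2*e'+1+2+m-1 = 2*e'+1+1+m by omega,
    Nat.mul_div_cancel_left _ (pow_pos hodd.pos _)]
  have hfib : (Nat.fib (n+1) : ℤ) = Nat.fib (n-1) + Nat.fib n := by
    exact_mod_cast Nat.fib_add_one (n := n) (by omega)
  rw [← Int.natCast_modEq_iff]
  refine (Int.modEq_iff_dvd.mpr ?_).symm
  rw [pow_succ, pow_mul] at h2
  obtain ⟨a, ha⟩ := h2
  obtain ⟨b, hb⟩ := hpow e'
  exact ⟨a + b * Nat.fib (n+1) + 1, by
    linear_combination ha + (Nat.fib (n+1) : ℤ) * hb + hfib⟩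
end

section
/- For all integers k ≥ 2, n ≥ 4, and m ≥ 1, the power F_n^{k+m-1} exactly divides G(k,n,m); that is, F_n^{k+m-1} ∣ G(k,n,m) but F_n^{k+m} ∤ G(k,n,m). -/
theorem fib_expand_s6 (s M : ℕ) : ∃ u v : ℕ,
    Nat.fib ((s+1)*(M+2)) = (M+2) * Nat.fib (s+1) * Nat.fib s ^ (M+1)
      + (M+2).choose 2 * Nat.fib (s+1)^2 * Nat.fib s ^ M + Nat.fib (s+1)^3 * u ∧
    Nat.fib ((s+1)*(M+2)+1) = Nat.fib s ^ (M+2) + (M+2) * Nat.fib (s+1) * Nat.fib s ^ (M+1)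
      + Nat.fib (s+1)^2 * v := by
  have step : ∀ K, Nat.fib ((s+1)*(K+1)) = Nat.fib ((s+1)*K) * Nat.fib s
        + Nat.fib ((s+1)*K+1) * Nat.fib (s+1) ∧
      Nat.fib ((s+1)*(K+1)+1) = Nat.fib ((s+1)*K+1) * (Nat.fib s + Nat.fib (s+1))
        + Nat.fib ((s+1)*K) * Nat.fib (s+1) := by
    intro K
    constructor
    · rw [← Nat.fib_add]; congr 1
    · have := Nat.fib_add ((s+1)*K) (s+1)
      rw [Nat.fib_add_two] at this
      rw [show (s+1)*(K+1)+1 = (s+1)*K + (s+1) + 1 by ring, this]; ring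
  induction M with
  | zero =>
    refine ⟨0, 2, ?_, ?_⟩
    · have h := (step 1).1
      have e : Nat.fib ((s+1)*1+1) = Nat.fib s + Nat.fib (s+1) := by
        rw [mul_one, ← Nat.fib_add_two]
      rw [e, mul_one] at h
      simp only [zero_add, Nat.choose_self]
      rw [show (1+1) = 2 from rfl] at h
      rw [h]; ring
    · have h := (step 1).2
      have e : Nat.fib ((s+1)*1+1) = Nat.fib s + Nat.fib (s+1) := by
        rw [mul_one, ← Nat.fib_add_two]
      rw [e, mul_one] at h
      simp only [zero_add]
      rw [show (1+1) = 2 from rfl] at h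
      rw [h]; ring
  | succ M ih =>
    obtain ⟨u, v, h1, h2⟩ := ih
    obtain ⟨g1, g2⟩ := step (M+2)
    rw [h1, h2] at g1 g2
    have hc : (M+1+2).choose 2 = (M+2) + (M+2).choose 2 := by
      rw [show M+1+2 = (M+2)+1 by ring, Nat.choose_succ_succ' (M+2) 1]; simp
    rw [hc, show M+1+2 = M+2+1 by ring, g1, g2]
    refine ⟨u * Nat.fib s + v, (M+2) * Nat.fib s ^(M+1) + v * (Nat.fib s + Nat.fib (s+1))
      + (M+2) * Nat.fib s ^ (M+1) + (M+2).choose 2 * Nat.fib (s+1) * Nat.fib s ^ M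
      + Nat.fib (s+1)^2 * u, ?_, ?_⟩
    · push_cast; ring
    · push_cast; ring

theorem fib_step_s6 {p : ℕ} (hp : p.Prime) {q : ℕ} (hq : q.Prime) {N : ℕ} (hN : N ≠ 0)
    (h1 : p ∣ Nat.fib N) (h2 : p = 2 → 4 ∣ Nat.fib N) :
    padicValNat p (Nat.fib (N * q)) = padicValNat p (Nat.fib N) + padicValNat p q := by
  haveI := Fact.mk hp
  obtain ⟨s, rfl⟩ := Nat.exists_eq_succ_of_ne_zero hN
  obtain ⟨M, rfl⟩ := Nat.exists_eq_add_of_le' hq.two_le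
  obtain ⟨u, v, e, -⟩ := fib_expand_s6 s M
  simp only [Nat.succ_eq_add_one] at *
  have hc : ¬ p ∣ Nat.fib s := fun h =>
    hp.one_lt.ne' (Nat.dvd_one.1 ((Nat.fib_coprime_fib_succ s) ▸ Nat.dvd_gcd h h1))
  have hx : Nat.fib (s+1) ≠ 0 := (Nat.fib_pos.2 (by omega)).ne'
  set x := Nat.fib (s+1) with hxdef
  set c := Nat.fib s
  have hcp : ∀ j, ¬ p ∣ c ^ j := fun j h => hc (hp.dvd_of_dvd_pow h)
  have e' : Nat.fib ((s+1)*(M+2)) =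
      x * ((M+2) * c^(M+1) + ((M+2).choose 2 * x * c^M + x^2 * u)) := by rw [e]; ring
  by_cases hpq : p = M+2
  · obtain ⟨w, hw⟩ : p * p ∣ (M+2).choose 2 * x * c^M + x^2 * u := by
      apply dvd_add
      · apply Dvd.dvd.mul_right
        by_cases hp2 : p = 2
        · exact Dvd.dvd.mul_left (by rw [hp2]; exact h2 hp2) _
        · refine mul_dvd_mul ?_ h1
          rw [← hpq]
          exact hp.dvd_choose_self (by norm_num) (lt_of_le_of_ne hp.two_le (Ne.symm hp2))
      · apply Dvd.dvd.mul_right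
        rw [sq]; exact mul_dvd_mul h1 h1
    have hy : ¬ p ∣ c^(M+1) + p * w := by
      intro h
      exact hcp _ ((Nat.dvd_add_left (Dvd.intro _ rfl)).1 h)
    rw [e', hw, ← hpq, show p * c^(M+1) + p*p*w = p * (c^(M+1) + p*w) by ring]
    have hy0 : c^(M+1) + p * w ≠ 0 := fun h => hy (h ▸ dvd_zero p)
    rw [padicValNat.mul hx (mul_ne_zero hp.ne_zero hy0), padicValNat.mul hp.ne_zero hy0,
      padicValNat.eq_zero_of_not_dvd hy]
    rfl
  · have hnd : ¬ p ∣ M + 2 := fun h => hpq ((Nat.prime_dvd_prime_iff_eq hp hq).1 h)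
    have hy : ¬ p ∣ (M+2) * c^(M+1) + ((M+2).choose 2 * x * c^M + x^2 * u) := by
      intro h
      have : p ∣ (M+2).choose 2 * x * c^M + x^2 * u := by
        apply dvd_add
        · exact Dvd.dvd.mul_right (Dvd.dvd.mul_left h1 _) _
        · exact Dvd.dvd.mul_right (dvd_pow h1 (by norm_num)) _
      rcases hp.dvd_mul.1 ((Nat.dvd_add_left this).1 h) with h | h
      · exact hnd h
      · exact hcp _ h
    have hy0 : (M+2) * c^(M+1) + ((M+2).choose 2 * x * c^M + x^2 * u) ≠ 0 :=
      fun h => hy (h ▸ dvd_zero p)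
    rw [e', padicValNat.mul hx hy0, padicValNat.eq_zero_of_not_dvd hy,
      padicValNat.eq_zero_of_not_dvd hnd]

theorem fib_val {p : ℕ} (hp : p.Prime) (M : ℕ) : M ≠ 0 → ∀ N, N ≠ 0 →
    p ∣ Nat.fib N → (p = 2 → 4 ∣ Nat.fib N) →
    padicValNat p (Nat.fib (N * M)) = padicValNat p (Nat.fib N) + padicValNat p M := by
  haveI := Fact.mk hp
  induction M using induction_on_primes with
  | zero => intro h; exact absurd rfl h
  | one => intro _ N _ _ _; simp
  | prime_mul q a hq ih =>
    intro h0 N hN h1 h2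
    have ha : a ≠ 0 := right_ne_zero_of_mul h0
    have hd : Nat.fib N ∣ Nat.fib (N * q) := Nat.fib_dvd _ _ (Dvd.intro _ rfl)
    rw [← mul_assoc, ih ha (N*q) (mul_ne_zero hN hq.ne_zero) (h1.trans hd)
      (fun h => (h2 h).trans hd), fib_step_s6 hp hq hN h1 h2, padicValNat.mul hq.ne_zero ha]
    ring

theorem fib_lower {n : ℕ} (hn : 4 ≤ n) (j : ℕ) :
    Nat.fib n ^ (j+1) ∣ Nat.fib (n * Nat.fib n ^ j) := by
  have ha : 3 ≤ Nat.fib n := le_trans (by decide) (Nat.fib_mono hn)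
  induction j with
  | zero => simp
  | succ j ih =>
    have hpos : n * Nat.fib n ^ j ≠ 0 := by positivity
    obtain ⟨s, hs⟩ := Nat.exists_eq_succ_of_ne_zero hpos
    obtain ⟨M, hM⟩ := Nat.exists_eq_add_of_le' (show 2 ≤ Nat.fib n by omega)
    obtain ⟨u, v, e, -⟩ := fib_expand_s6 s M
    have hd : Nat.fib n ∣ Nat.fib (s+1) :=
      Nat.fib_dvd _ _ (by rw [← Nat.succ_eq_add_one, ← hs]; exact Dvd.intro _ rfl)
    have hE : n * Nat.fib n ^ (j+1) = (s+1) * (M+2) := by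
      rw [pow_succ, ← mul_assoc, hs, hM]
    rw [hE, e, pow_succ]
    rw [hs] at ih
    have key : Nat.fib (s+1) * Nat.fib n ∣ (M+2) * Nat.fib (s+1) * Nat.fib s ^ (M+1)
      + (M+2).choose 2 * Nat.fib (s+1)^2 * Nat.fib s ^ M + Nat.fib (s+1)^3 * u := by
      obtain ⟨t, ht⟩ := hd
      have : (M+2) * Nat.fib (s+1) * Nat.fib s ^ (M+1)
        + (M+2).choose 2 * Nat.fib (s+1)^2 * Nat.fib s ^ M + Nat.fib (s+1)^3 * u
        = Nat.fib (s+1) * (Nat.fib n * Nat.fib s ^ (M+1) +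
          Nat.fib (s+1) * ((M+2).choose 2 * Nat.fib s ^ M + Nat.fib (s+1) * u)) := by
        rw [hM]; ring
      rw [this]
      apply mul_dvd_mul_left
      exact dvd_add (Dvd.intro _ rfl) (Dvd.dvd.mul_right ⟨t, ht⟩ _)
    exact (mul_dvd_mul_right ih _).trans key

theorem exists_good_prime {a : ℕ} (ha : 3 ≤ a) : ∃ p, p.Prime ∧ p ∣ a ∧ (p = 2 → 4 ∣ a) := by
  by_cases h4 : 4 ∣ a
  · exact ⟨2, Nat.prime_two, (by norm_num : 2 ∣ 4).trans h4, fun _ => h4⟩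
  by_cases h2 : 2 ∣ a
  · obtain ⟨b, rfl⟩ := h2
    have hb : b ≠ 1 := by omega
    refine ⟨b.minFac, Nat.minFac_prime hb, Dvd.dvd.mul_left (Nat.minFac_dvd b) _, fun h => ?_⟩
    have := Nat.minFac_dvd b
    rw [h] at this
    omega
  · refine ⟨a.minFac, Nat.minFac_prime (by omega), Nat.minFac_dvd a, fun h => ?_⟩
    have := Nat.minFac_dvd a
    rw [h] at this
    omega

theorem stmt_6 (k n m : ℕ) (hk : 2 ≤ k) (hn : 4 ≤ n) (hm : 1 ≤ m) :
    Nat.fib n ^ (k + m - 1) ∣ G n m k ∧ ¬ (Nat.fib n ^ (k + m) ∣ G n m k) := by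
  have ha : 3 ≤ Nat.fib n := le_trans (by decide) (Nat.fib_mono hn)
  have ha0 : Nat.fib n ≠ 0 := by omega
  obtain ⟨p, hp, h1, h2⟩ := exists_good_prime ha
  haveI := Fact.mk hp
  have main : ∀ j, G n m (j+1) ≠ 0 ∧ Nat.fib n ^ (j + m) ∣ G n m (j+1) ∧
      padicValNat p (G n m (j+1)) = (j+m) * padicValNat p (Nat.fib n) := by
    intro j
    induction j with
    | zero =>
      refine ⟨pow_ne_zero _ ha0, ?_, ?_⟩
      · simp [G]
      · simp [G, padicValNat.pow]
    | succ j ih =>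
      obtain ⟨i0, i1, i2⟩ := ih
      have hG : G n m (j+1+1) = Nat.fib (n * G n m (j+1)) := rfl
      rw [hG]
      refine ⟨(Nat.fib_pos.2 (Nat.mul_pos (by omega) (Nat.pos_of_ne_zero i0))).ne', ?_, ?_⟩
      · rw [show j+1+m = j+m+1 by ring]
        exact (fib_lower hn (j+m)).trans (Nat.fib_dvd _ _ (mul_dvd_mul_left n i1))
      · rw [fib_val hp _ i0 n (by omega) h1 h2, i2]; ring
  obtain ⟨j, rfl⟩ := Nat.exists_eq_add_of_le' (show 1 ≤ k by omega)
  obtain ⟨i0, i1, i2⟩ := main j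
  refine ⟨by rw [show j+1+m-1 = j+m by omega]; exact i1, fun h => ?_⟩
  have hv := (padicValNat_dvd_iff_le i0).1
    ((pow_padicValNat_dvd (p := p) (n := Nat.fib n ^ (j+1+m))).trans h)
  rw [i2, padicValNat.pow] at hv
  have hpos : 1 ≤ padicValNat p (Nat.fib n) := one_le_padicValNat_of_dvd ha0 h1
  nlinarith
end

section
/- For every integer n ≥ 3 with 3 ∤ n, the integer F_{n·F_n}/F_n^2 satisfies F_{n·F_n}/F_n^2 ≡ 1 (mod F_n); and for every integer n ≥ 3 with 3 ∣ n, F_{n·F_n}/F_n^2 ≡ F_{n-3}/2 (mod F_n). (When 3 ∣ n, F_{n-3} is even, so F_{n-3}/2 is an integer; also F_n^2 ∣ F_{n·F_n}, so the quotient is an integer.) -/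
theorem aux_exp (N k : ℕ) : ∃ u v : ℤ,
    (Nat.fib ((k+2) * (N+1)) : ℤ) = (Nat.fib N : ℤ)^k * ((k+2) * Nat.fib N * Nat.fib (N+1)
      + (Nat.choose (k+2) 2 : ℤ) * (Nat.fib (N+1) : ℤ)^2) + u * (Nat.fib (N+1) : ℤ)^3 ∧
    (Nat.fib ((k+2) * (N+1) + 1) : ℤ) = (Nat.fib N : ℤ)^k * ((Nat.fib N : ℤ)^2
      + (k+2) * Nat.fib N * Nat.fib (N+1)) + v * (Nat.fib (N+1) : ℤ)^2 := by
  have h2 : (Nat.fib (N+1+1) : ℤ) = Nat.fib N + Nat.fib (N+1) := by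
    exact_mod_cast Nat.fib_add_two
  induction k with
  | zero =>
    refine ⟨0, 2, ?_, ?_⟩
    · have : (0+2) * (N+1) = (N+1) + N + 1 := by ring
      rw [this, Nat.fib_add]
      push_cast
      rw [h2]
      simp
      ring
    · have : (0+2) * (N+1) + 1 = (N+1) + (N+1) + 1 := by ring
      rw [this, Nat.fib_add]
      push_cast
      rw [h2]
      simp
      ring
  | succ k ih =>
    obtain ⟨u, v, hx, hy⟩ := ih
    have e1 : (k+1+2) * (N+1) = ((k+2) * (N+1)) + N + 1 := by ring
    have e2 : (k+1+2) * (N+1) + 1 = ((k+2) * (N+1)) + (N+1) + 1 := by ring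
    have hc : (Nat.choose (k+1+2) 2 : ℤ) = (k+2) + Nat.choose (k+2) 2 := by
      have := Nat.choose_succ_succ (k+2) 1
      rw [Nat.choose_one_right] at this
      exact_mod_cast this
    rw [e2, e1, Nat.fib_add, Nat.fib_add]
    push_cast
    rw [h2, hx, hy, hc]
    generalize (Nat.choose (k+2) 2 : ℤ) = C
    generalize (Nat.fib N : ℤ) = a
    generalize (Nat.fib (N+1) : ℤ) = f
    refine ⟨u * a + v, u * f^2 + v * a + v * f + a^k * ((k+2) * a * 2 + C * f), ?_, ?_⟩ <;> ring

theorem aux_mod4 (m : ℕ) : Nat.fib (6*m) % 4 = 0 ∧ Nat.fib (6*m+1) % 4 = 1 := by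
  induction m with
  | zero => simp
  | succ m ih =>
    have e : 6 * (m+1) = 6*m+6 := by ring
    rw [e]
    simp only [Nat.fib_add_two (n := 6*m), Nat.fib_add_two (n := 6*m+1), Nat.fib_add_two (n := 6*m+2),
      Nat.fib_add_two (n := 6*m+3), Nat.fib_add_two (n := 6*m+4), Nat.fib_add_two (n := 6*m+5)]
    omega

theorem aux_mod4' (n : ℕ) : (n % 6 = 0 → Nat.fib n % 4 = 0) ∧ (n % 6 = 1 → Nat.fib n % 4 = 1) ∧
    (n % 6 = 2 → Nat.fib n % 4 = 1) ∧ (n % 6 = 3 → Nat.fib n % 4 = 2) ∧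
    (n % 6 = 4 → Nat.fib n % 4 = 3) ∧ (n % 6 = 5 → Nat.fib n % 4 = 1) := by
  obtain ⟨m, r, hr, rfl⟩ : ∃ m r, r < 6 ∧ n = 6*m+r := ⟨n/6, n%6, by omega, by omega⟩
  have h := aux_mod4 m
  have a1 := Nat.fib_add_two (n := 6*m)
  have a2 := Nat.fib_add_two (n := 6*m+1)
  have a3 := Nat.fib_add_two (n := 6*m+2)
  have a4 := Nat.fib_add_two (n := 6*m+3)
  simp only [add_assoc, Nat.reduceAdd] at a1 a2 a3 a4
  interval_cases r <;> (try simp only [add_zero]) <;> omega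

theorem aux_cassini (N : ℕ) : (Nat.fib N : ℤ)^2 + Nat.fib N * Nat.fib (N+1) - (Nat.fib (N+1) : ℤ)^2
    = (-1)^(N+1) := by
  induction N with
  | zero => simp
  | succ N ih =>
    have h2 : (Nat.fib (N+1+1) : ℤ) = Nat.fib N + Nat.fib (N+1) := by
      exact_mod_cast Nat.fib_add_two
    rw [h2, pow_succ (-1 : ℤ) (N+1), ← ih]; ring

theorem aux_sq (N : ℕ) : (Nat.fib N : ℤ)^2 ≡ (-1)^(N+1) [ZMOD Nat.fib (N+1)] := by
  rw [← aux_cassini]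
  exact (Int.modEq_iff_dvd.2 ⟨Nat.fib N - Nat.fib (N+1), by ring⟩)

/-- even powers of `F_N` that are `1` modulo `F_{N+1}` -/
theorem aux_pow (N e : ℕ) (he : e % 2 = 0) (h : (N+1) % 2 = 1 → e % 4 = 0) :
    (Nat.fib N : ℤ)^e ≡ 1 [ZMOD Nat.fib (N+1)] := by
  obtain ⟨d, rfl⟩ : ∃ d, e = 2*d := ⟨e/2, by omega⟩
  rw [pow_mul]
  refine ((aux_sq N).pow d).trans ?_
  rw [← pow_mul, Even.neg_one_pow]
  rw [Nat.even_mul, Nat.even_iff, Nat.even_iff]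
  omega

theorem aux_quot (N : ℕ) (hN : 2 ≤ Nat.fib (N+1)) :
    ((Nat.fib ((N+1) * Nat.fib (N+1)) / Nat.fib (N+1) ^ 2 : ℕ) : ℤ) ≡
      (Nat.fib N : ℤ)^(Nat.fib (N+1) - 2) * (Nat.fib N + Nat.choose (Nat.fib (N+1)) 2)
      [ZMOD Nat.fib (N+1)] := by
  obtain ⟨k, hk⟩ : ∃ k, Nat.fib (N+1) = k + 2 := ⟨_, (Nat.sub_add_cancel hN).symm⟩
  obtain ⟨u, v, hx, -⟩ := aux_exp N k
  rw [← hk, mul_comm] at hx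
  have hk' : (k : ℤ) + 2 = Nat.fib (N+1) := by rw [hk]; push_cast; ring
  rw [hk'] at hx
  have e : Nat.fib (N+1) - 2 = k := by omega
  rw [e]
  have hf : (Nat.fib (N+1) : ℤ) ≠ 0 := by omega
  push_cast
  have : (Nat.fib ((N+1) * Nat.fib (N+1)) : ℤ) = (Nat.fib (N+1) : ℤ)^2 *
    ((Nat.fib N : ℤ)^k * (Nat.fib N + Nat.choose (Nat.fib (N+1)) 2) + u * Nat.fib (N+1)) := by
    rw [hx]; ring
  rw [this, Int.mul_ediv_cancel_left _ (pow_ne_zero 2 hf)]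
  exact (Int.modEq_iff_dvd.2 ⟨-u, by ring⟩)

theorem stmt_7 (n : ℕ) (hn : 3 ≤ n) :
    (¬ (3 ∣ n) →
      Nat.fib (n * Nat.fib n) / Nat.fib n ^ 2 ≡ 1 [MOD Nat.fib n]) ∧
    (3 ∣ n →
      Nat.fib (n * Nat.fib n) / Nat.fib n ^ 2 ≡ Nat.fib (n - 3) / 2 [MOD Nat.fib n]) := by
  obtain ⟨M, rfl⟩ : ∃ M, n = M + 3 := ⟨n - 3, by omega⟩
  have hf2 : 2 ≤ Nat.fib (M+2+1) := by
    have := Nat.fib_mono (show 3 ≤ M+2+1 by omega)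
    simpa [Nat.fib] using this
  have hq := aux_quot (M+2) hf2
  have hm := aux_mod4' (M+2+1)
  have hp := aux_pow (M+2)
  have f2 : Nat.fib (M+2+1) = Nat.fib (M+1) + Nat.fib (M+2) := Nat.fib_add_two
  have f1 : Nat.fib (M+2) = Nat.fib M + Nat.fib (M+1) := Nat.fib_add_two
  have hC : 2 * Nat.choose (Nat.fib (M+2+1)) 2 = Nat.fib (M+2+1) * (Nat.fib (M+2+1) - 1) := by
    rw [Nat.choose_two_right, Nat.mul_div_cancel' (Nat.even_mul_pred_self _).two_dvd]
  have hC' : 2 * (Nat.choose (Nat.fib (M+2+1)) 2 : ℤ) = Nat.fib (M+2+1) * (Nat.fib (M+2+1) - 1) := by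
    have := congrArg (Nat.cast : ℕ → ℤ) hC
    rw [Nat.cast_mul, Nat.cast_mul, Nat.cast_sub (by omega)] at this
    exact_mod_cast this
  change (¬ (3 ∣ M+2+1) →
      Nat.fib ((M+2+1) * Nat.fib (M+2+1)) / Nat.fib (M+2+1) ^ 2 ≡ 1 [MOD Nat.fib (M+2+1)]) ∧
    (3 ∣ M+2+1 →
      Nat.fib ((M+2+1) * Nat.fib (M+2+1)) / Nat.fib (M+2+1) ^ 2 ≡ Nat.fib M / 2 [MOD Nat.fib (M+2+1)])
  generalize Nat.fib ((M+2+1) * Nat.fib (M+2+1)) / Nat.fib (M+2+1) ^ 2 = q at *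
  generalize hf : Nat.fib (M+2+1) = f at *
  generalize Nat.fib (M+2) = a at *
  generalize Nat.choose f 2 = C at *
  constructor
  · intro h3
    rw [← Int.natCast_modEq_iff]
    refine hq.trans ?_
    have hodd : f % 2 = 1 := by omega
    obtain ⟨g, hg⟩ : ∃ g, f = 2*g+1 := ⟨f/2, by omega⟩
    have hCf : (C : ℤ) = f * g := by
      rw [hg] at hC' ⊢; push_cast at hC' ⊢; linarith
    have e : f - 1 = (f-2) + 1 := by omega
    have := hp (f-1) (by omega) (by omega)
    rw [e, pow_succ] at this
    refine Int.ModEq.trans ?_ this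
    exact Int.modEq_iff_dvd.2 ⟨-((a:ℤ)^(f-2) * g), by rw [hCf]; ring⟩
  · intro h3
    rw [← Int.natCast_modEq_iff]
    refine hq.trans ?_
    obtain ⟨g, hg⟩ : ∃ g, f = 2*g := ⟨f/2, by omega⟩
    have := (hp (f-2) (by omega) (by omega)).mul_right ((a:ℤ) + C)
    refine this.trans ?_
    have hb : ((Nat.fib M / 2 : ℕ) : ℤ) = a - g := by omega
    rw [hb]
    have hCf : (C : ℤ) = g * (f - 1) := by
      rw [hg] at hC' ⊢; push_cast at hC' ⊢; linarith
    exact Int.modEq_iff_dvd.2 ⟨-g, by rw [hCf]; ring⟩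
end

section
/- Let a, j ≥ 1 and s ≥ 2 be positive integers, and let c be the smallest nonnegative integer such that j divides a·s^c (assuming such c exists, e.g. if j ∣ a·s^N for some N). Then there exists a prime p such that p divides s and p^c divides j. -/
theorem stmt_11 (a j s : ℕ) (c : ℕ) (ha : 1 ≤ a) (hj : 1 ≤ j) (hs : 2 ≤ s)
    (hc : j ∣ a * s ^ c) (hmin : ∀ c' < c, ¬ (j ∣ a * s ^ c')) :
    ∃ p : ℕ, p.Prime ∧ p ∣ s ∧ p ^ c ∣ j := by
  have ha0 : a ≠ 0 := by omega
  have hj0 : j ≠ 0 := by omega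
  have hs0 : s ≠ 0 := by omega
  cases c with
  | zero => exact ⟨s.minFac, Nat.minFac_prime (by omega), Nat.minFac_dvd s, by simp⟩
  | succ k =>
    have h := hmin k (Nat.lt_succ_self k)
    have hf : ∀ m p, (a * s ^ m).factorization p
        = a.factorization p + m * s.factorization p := by
      intro m p
      rw [Nat.factorization_mul ha0 (pow_ne_zero _ hs0), Nat.factorization_pow]
      simp
    rw [← Nat.factorization_le_iff_dvd hj0 (mul_ne_zero ha0 (pow_ne_zero _ hs0)),
      Finsupp.le_def] at h hc
    push Not at h
    obtain ⟨p, hp⟩ := h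
    have hcp := hc p
    rw [hf] at hp hcp
    have hpp : p.Prime := by
      by_contra hn
      rw [Nat.factorization_eq_zero_of_not_prime j hn] at hp
      omega
    have hsp : 1 ≤ s.factorization p := by
      by_contra hn
      have h0 : s.factorization p = 0 := by omega
      rw [h0] at hp hcp
      omega
    refine ⟨p, hpp, Nat.dvd_of_factorization_pos (by omega), ?_⟩
    rw [hpp.pow_dvd_iff_le_factorization hj0]
    nlinarith
end

section
/- Let k, ℓ, r, s be positive integers with s^k ∣ r. Then for every j with 1 ≤ j ≤ r satisfying 2^{j-ℓ+1} > j, we have s^{k+ℓ} ∣ binom(r, j)·s^j. -/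
theorem dvd_pow_of_lt_two_pow (s k : ℕ) : ∀ (d g : ℕ), 0 < g → g ∣ s ^ k → g < 2 ^ (d + 1) →
    g ∣ s ^ d := by
  intro d
  induction d with
  | zero =>
    intro g h0 _ h2
    have : g = 1 := by
      simp at h2
      omega
    simp [this]
  | succ d ih =>
    intro g h0 h1 h2
    by_cases hc : Nat.gcd g s = 1
    · have h3 : g = 1 := Nat.Coprime.eq_one_of_dvd (Nat.Coprime.pow_right k hc) h1
      simp [h3]
    · have hpos : 0 < Nat.gcd g s := Nat.gcd_pos_of_pos_left _ h0
      obtain ⟨q, hq⟩ := Nat.gcd_dvd_left g s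
      have hq0 : 0 < q := by
        rcases Nat.eq_zero_or_pos q with h | h
        · rw [h] at hq
          omega
        · exact h
      have hqg : q ∣ g := ⟨Nat.gcd g s, by rw [mul_comm]; exact hq⟩
      have h4 : 2 * q ≤ g := by
        calc 2 * q ≤ Nat.gcd g s * q := Nat.mul_le_mul_right q (by omega)
          _ = g := hq.symm
      have h5 : q ∣ s ^ d := ih q hq0 (hqg.trans h1) (by rw [pow_succ] at h2; omega)
      rw [hq, pow_succ, mul_comm (s ^ d) s]
      exact mul_dvd_mul (Nat.gcd_dvd_right g s) h5

theorem stmt_12 (k l r s : ℕ) (hk : 1 ≤ k) (hl : 1 ≤ l) (hr : 1 ≤ r) (hs : 1 ≤ s)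
    (hdvd : s ^ k ∣ r) (j : ℕ) (hj1 : 1 ≤ j) (hjr : j ≤ r)
    (hpow : 2 ^ (j + 1) > j * 2 ^ l) :
    s ^ (k + l) ∣ r.choose j * s ^ j := by
  have hlj : l ≤ j := by
    have h : 2 ^ l < 2 ^ (j + 1) := lt_of_le_of_lt (Nat.le_mul_of_pos_left _ hj1) hpow
    have := (Nat.pow_lt_pow_iff_right (by norm_num : 1 < 2)).1 h
    omega
  obtain ⟨d, rfl⟩ := Nat.exists_eq_add_of_le hlj
  have hjd : l + d < 2 ^ (d + 1) := by
    have h : (l + d) * 2 ^ l < 2 ^ (d + 1) * 2 ^ l := by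
      rw [← pow_add]
      have e : d + 1 + l = l + d + 1 := by omega
      rw [e]
      exact hpow
    exact lt_of_mul_lt_mul_right h (Nat.zero_le _)
  have hC : s ^ k ∣ (l + d) * r.choose (l + d) := by
    obtain ⟨r', rfl⟩ := Nat.exists_eq_add_of_le' hr
    obtain ⟨j', hj'⟩ := Nat.exists_eq_add_of_le' hj1
    rw [hj', mul_comm, ← Nat.add_one_mul_choose_eq]
    exact hdvd.mul_right _
  have hg : Nat.gcd (l + d) (s ^ k) ∣ s ^ d :=
    dvd_pow_of_lt_two_pow s k d _ (Nat.gcd_pos_of_pos_left _ hj1) (Nat.gcd_dvd_right _ _)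
      (lt_of_le_of_lt (Nat.gcd_le_left _ hj1) hjd)
  have h1 : s ^ k ∣ Nat.gcd (l + d) (s ^ k) * r.choose (l + d) := by
    rw [← Nat.gcd_mul_right]
    exact Nat.dvd_gcd hC (dvd_mul_right _ _)
  have h2 : s ^ k ∣ s ^ d * r.choose (l + d) := h1.trans (mul_dvd_mul_right hg _)
  have h3 : r.choose (l + d) * s ^ (l + d) = (s ^ d * r.choose (l + d)) * s ^ l := by ring
  rw [h3, pow_add]
  exact mul_dvd_mul_right h2 _
end

section
/- Let m, n ≥ 1 and k ≥ 2 be integers and set r = G(k,n,m). Then r is even if and only if 3 ∣ n or 4 ∣ n. -/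
theorem two_dvd_fib (j : ℕ) : 2 ∣ Nat.fib j ↔ 3 ∣ j := by
  constructor
  · intro h
    have h1 := Nat.fib_gcd 3 j
    rw [show Nat.fib 3 = 2 from rfl, Nat.gcd_eq_left h] at h1
    rcases (Nat.dvd_prime Nat.prime_three).1 (Nat.gcd_dvd_left 3 j) with h2 | h2
    · rw [h2] at h1; simp at h1
    · exact h2 ▸ Nat.gcd_dvd_right 3 j
  · intro h
    exact Nat.fib_dvd 3 j h

theorem three_dvd_fib (j : ℕ) : 3 ∣ Nat.fib j ↔ 4 ∣ j := by
  constructor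
  · intro h
    have h1 := Nat.fib_gcd 4 j
    rw [show Nat.fib 4 = 3 from rfl, Nat.gcd_eq_left h] at h1
    have h3 := Nat.gcd_dvd_left 4 j
    have h4 := Nat.gcd_dvd_right 4 j
    generalize Nat.gcd 4 j = d at *
    have h5 : d ≤ 4 := Nat.le_of_dvd (by norm_num) h3
    interval_cases d <;> simp_all [Nat.fib]
  · intro h
    exact Nat.fib_dvd 4 j h

theorem G_three (m n : ℕ) (hm : 1 ≤ m) (h : 4 ∣ n) (k : ℕ) : 3 ∣ G n m (k+1) := by
  cases k with
  | zero =>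
    rw [zero_add, G]
    exact dvd_pow ((three_dvd_fib n).2 h) (by omega)
  | succ k =>
    rw [G]
    exact (three_dvd_fib _).2 (h.mul_right _)

theorem G_odd (m n : ℕ) (h3 : ¬ 3 ∣ n) (h4 : ¬ 4 ∣ n) (k : ℕ) :
    ¬ 3 ∣ G n m (k+1) ∧ ¬ 2 ∣ G n m (k+1) := by
  induction k with
  | zero =>
    rw [zero_add, G]
    exact ⟨fun h => h4 ((three_dvd_fib n).1 (Nat.prime_three.dvd_of_dvd_pow h)),
      fun h => h3 ((two_dvd_fib n).1 (Nat.prime_two.dvd_of_dvd_pow h))⟩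
  | succ k ih =>
    rw [G, three_dvd_fib, two_dvd_fib, Nat.prime_three.dvd_mul]
    refine ⟨fun h => h4 ?_, fun h => h.elim h3 ih.1⟩
    have hc : Nat.Coprime 4 (G n m (k+1)) :=
      Nat.Coprime.pow_left 2 ((Nat.Prime.coprime_iff_not_dvd Nat.prime_two).2 ih.2)
    exact hc.dvd_of_dvd_mul_right h

theorem stmt_14 (m n k : ℕ) (hm : 1 ≤ m) (hn : 1 ≤ n) (hk : 2 ≤ k) :
    Even (G n m k) ↔ (3 ∣ n ∨ 4 ∣ n) := by
  obtain ⟨k, rfl⟩ := Nat.exists_eq_add_of_le' hk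
  rw [even_iff_two_dvd]
  constructor
  · intro h
    by_contra! hc
    exact (G_odd m n hc.1 hc.2 (k+1)).2 h
  · intro h
    rw [G, two_dvd_fib]
    rcases h with h | h
    · exact h.mul_right _
    · exact (G_three m n hm h k).mul_left _
end

section
/- Let m, n ≥ 1 and k ≥ 2 be integers and set r = G(k,n,m). If n is odd and 3 ∤ n, then r ≡ 1 (mod 4). -/
theorem fib_mod_aux (q r : ℕ) : Nat.fib (24 * q + r) % 12 = Nat.fib r % 12 := by
  induction q with
  | zero => simp
  | succ q ih =>
    have h := Nat.fib_add (24 * q + r) 23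
    have h1 : Nat.fib 23 = 28657 := by norm_num
    have h2 : Nat.fib (23 + 1) = 46368 := by norm_num
    rw [h1, h2] at h
    have e : 24 * (q + 1) + r = 24 * q + r + 23 + 1 := by ring
    rw [e, h]
    omega

theorem fib_cop_aux (j : ℕ) (hj : Nat.Coprime j 6) :
    Nat.Coprime (Nat.fib j) 6 ∧ Nat.fib j % 4 = 1 := by
  have h := fib_mod_aux (j / 24) (j % 24)
  rw [Nat.div_add_mod] at h
  have hlt : j % 24 < 24 := Nat.mod_lt _ (by norm_num)
  have hc : Nat.gcd (j % 24 % 6) 6 = 1 := by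
    rw [Nat.mod_mod_of_dvd _ (by norm_num), ← Nat.gcd_rec, Nat.gcd_comm]
    exact hj
  have key : ∀ r < 24, Nat.gcd (r % 6) 6 = 1 →
      Nat.gcd (Nat.fib r % 12 % 6) 6 = 1 ∧ Nat.fib r % 12 % 4 = 1 := by decide
  obtain ⟨h1, h2⟩ := key _ hlt hc
  rw [← h] at h1 h2
  rw [Nat.mod_mod_of_dvd _ (by norm_num)] at h1 h2
  rw [← Nat.gcd_rec, Nat.gcd_comm] at h1
  exact ⟨h1, h2⟩

theorem G_cop_aux (n m : ℕ) (hn : Nat.Coprime n 6) (k : ℕ) :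
    Nat.Coprime (G n m (k + 1)) 6 := by
  induction k with
  | zero => exact Nat.Coprime.pow_left m (fib_cop_aux n hn).1
  | succ k ih => exact (fib_cop_aux _ (Nat.Coprime.mul_left hn ih)).1

theorem stmt_15 (m n k : ℕ) (hm : 1 ≤ m) (hn : 1 ≤ n) (hk : 2 ≤ k)
    (hodd : Odd n) (h3 : ¬ (3 ∣ n)) :
    G n m k ≡ 1 [MOD 4] := by
  have hc : Nat.Coprime n 6 := by
    have h2 : Nat.Coprime n 2 := hodd.coprime_two_right
    have h3' : Nat.Coprime n 3 := ((Nat.Prime.coprime_iff_not_dvd Nat.prime_three).2 h3).symm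
    exact Nat.Coprime.mul_right h2 h3'
  obtain ⟨k, rfl⟩ := Nat.exists_eq_add_of_le' hk
  exact (fib_cop_aux _ (Nat.Coprime.mul_left hc (G_cop_aux n m hc k))).2
end

section
/- Let m, n ≥ 1 and k ≥ 2 be integers and set r = G(k,n,m). If 3 ∣ n, then r ≡ 0 (mod 8). -/
theorem G_even (m n : ℕ) (hm : 1 ≤ m) (h3 : 3 ∣ n) (k : ℕ) : 2 ∣ G n m (k + 1) := by
  have h2 : ∀ a, 3 ∣ a → 2 ∣ Nat.fib a := fun a ha => Nat.fib_dvd 3 a ha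
  cases k with
  | zero =>
    rw [G]
    exact dvd_pow (h2 n h3) (by omega)
  | succ k =>
    rw [G]
    exact h2 _ (Dvd.dvd.mul_right h3 _)

theorem stmt_16 (m n k : ℕ) (hm : 1 ≤ m) (hn : 1 ≤ n) (hk : 2 ≤ k)
    (h3 : 3 ∣ n) :
    G n m k ≡ 0 [MOD 8] := by
  obtain ⟨j, rfl⟩ := Nat.exists_eq_add_of_le' hk
  rw [Nat.modEq_zero_iff_dvd, G]
  have h6 : 3 * 2 ∣ n * G n m (j + 1) := mul_dvd_mul h3 (G_even m n hm h3 j)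
  exact Nat.fib_dvd 6 _ h6
end

section
/- For all positive integers n and r, F_{n·r} = Σ_{j=1}^{r} binom(r, j) · F_n^j · F_{n-1}^{r-j} · F_j. -/
theorem stmt_17 (n r : ℕ) (hn : 1 ≤ n) (hr : 1 ≤ r) :
    Nat.fib (n * r) =
      ∑ j ∈ Finset.Icc 1 r,
        r.choose j * Nat.fib n ^ j * Nat.fib (n - 1) ^ (r - j) * Nat.fib j := by
  obtain ⟨m, rfl⟩ : ∃ m, n = m + 1 := ⟨n - 1, by omega⟩
  have hs : ∑ j ∈ Finset.Icc 1 r,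
        r.choose j * Nat.fib (m + 1) ^ j * Nat.fib (m + 1 - 1) ^ (r - j) * Nat.fib j
      = ∑ j ∈ Finset.range (r + 1),
        r.choose j * Nat.fib (m + 1) ^ j * Nat.fib m ^ (r - j) * Nat.fib j := by
    apply Finset.sum_subset
    · intro j hj
      simp only [Finset.mem_Icc, Finset.mem_range] at *
      omega
    · intro j hj hj'
      simp only [Finset.mem_Icc, Finset.mem_range] at *
      have : j = 0 := by omega
      simp [this]
  rw [hs]
  have h : ((Nat.fib ((m + 1) * r) : ℕ) : ℝ) = ((∑ j ∈ Finset.range (r + 1),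
        r.choose j * Nat.fib (m + 1) ^ j * Nat.fib m ^ (r - j) * Nat.fib j : ℕ) : ℝ) := by
    push_cast
    simp only [Real.coe_fib_eq ((m + 1) * r), pow_mul,
      ← Real.goldenRatio_mul_fib_succ_add_fib, ← Real.goldenConj_mul_fib_succ_add_fib]
    rw [add_pow, add_pow, ← Finset.sum_sub_distrib, Finset.sum_div]
    apply Finset.sum_congr rfl
    intro j _
    rw [Real.coe_fib_eq j, mul_pow, mul_pow]
    generalize Real.goldenRatio = x
    generalize Real.goldenConj = y
    ring
  exact_mod_cast h
end

section
/- Let n ≥ 4 be an integer with 3 ∣ n, and let k ≥ 2 be an integer. Then F_n does not divide (F_{n-3}/2)^{k-1}. (Since 3 ∣ n implies F_{n-3} is even, F_{n-3}/2 is an integer.) -/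
theorem stmt_18 (n k : ℕ) (hn : 4 ≤ n) (h3 : 3 ∣ n) (hk : 2 ≤ k) :
    ¬ (Nat.fib n ∣ (Nat.fib (n - 3) / 2) ^ (k - 1)) := by
  intro h
  obtain ⟨m, rfl⟩ := h3
  have h6 : 6 ≤ 3 * m := by omega
  have hF : 8 ≤ Nat.fib (3 * m) := by
    have := Nat.fib_mono h6
    have e : Nat.fib 6 = 8 := by decide
    omega
  have hg : Nat.gcd (Nat.fib (3 * m)) (Nat.fib (3 * m - 3)) = 2 := by
    rw [← Nat.fib_gcd]
    have : Nat.gcd (3 * m) (3 * m - 3) = 3 := by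
      obtain ⟨j, rfl⟩ : ∃ j, m = j + 1 := ⟨m - 1, by omega⟩
      have e : 3 * (j + 1) - 3 = 3 * j := by omega
      rw [e, Nat.gcd_mul_left]
      simp
    rw [this]; decide
  obtain ⟨a, ha⟩ : 2 ∣ Nat.fib (3 * m) := hg ▸ Nat.gcd_dvd_left _ _
  obtain ⟨b, hb⟩ : 2 ∣ Nat.fib (3 * m - 3) := by
    have := Nat.gcd_dvd_right (Nat.fib (3 * m)) (Nat.fib (3 * m - 3))
    rwa [hg] at this
  rw [ha, hb, Nat.gcd_mul_left] at hg
  have hc : Nat.Coprime a b := by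
    have : Nat.gcd a b = 1 := by omega
    exact this
  rw [ha, hb, Nat.mul_div_cancel_left b (by norm_num)] at h
  have h1 : a ∣ b ^ (k - 1) := (Dvd.intro_left 2 rfl).trans h
  have h2 : a = 1 := Nat.Coprime.eq_one_of_dvd (hc.pow_right _) h1
  omega
end
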